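/- arXiv:2508.18997 — 4 statements merged into one kernel-verified Lean document; each statement's English description precedes it below -/
import Mathlib

section
/- Let (T,𝒯,μ) be a complete finite measure space, Y a separable Banach space, and Z a complete separable metric space. Let Ψ: T×Z → 2^Y be a convex-valued (possibly empty-valued) correspondence that is jointly lower measurable and such that Ψ(t,·): Z → 2^Y is lower-semicontinuous for every t ∈ T. Assume at least one of the following holds: Y is finite-dimensional; Ψ is closed-valued; or int Ψ(t,x) ≠ ∅ for all (t,x) ∈ U_Ψ. Then there exists a Carathéodory-type selection ψ: U_Ψ → Y of the restriction of Ψ to U_Ψ. -/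
open MeasureTheory Set TopologicalSpace

noncomputable section

/-- A correspondence `Φ : Z → 2^Y` is lower-semicontinuous if `{x | Φ x ∩ V ≠ ∅}` is open
for every open `V ⊆ Y`. -/
def LSCCorr {Z Y : Type*} [TopologicalSpace Z] [TopologicalSpace Y] (Φ : Z → Set Y) : Prop :=
  ∀ V : Set Y, IsOpen V → IsOpen {x : Z | (Φ x ∩ V).Nonempty}

/-- Lower semicontinuity of the restriction of a correspondence to a subset `O`
(with the subspace topology). -/
def LSCCorrOn {Z Y : Type*} [TopologicalSpace Z] [TopologicalSpace Y] (Φ : Z → Set Y)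
    (O : Set Z) : Prop :=
  ∀ V : Set Y, IsOpen V → IsOpen {x : O | (Φ (x : Z) ∩ V).Nonempty}

/-- A correspondence `Φ : Z → 2^Y` is upper-semicontinuous if `{x | Φ x ⊆ V}` is open
for every open `V ⊆ Y`. -/
def USCCorr {Z Y : Type*} [TopologicalSpace Z] [TopologicalSpace Y] (Φ : Z → Set Y) : Prop :=
  ∀ V : Set Y, IsOpen V → IsOpen {x : Z | Φ x ⊆ V}

/-- A correspondence `Φ : T → 2^Y` is lower measurable if `{t | Φ t ∩ V ≠ ∅}` is measurable
for every open `V ⊆ Y`. -/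
def LowerMeasCorr {T Y : Type*} [MeasurableSpace T] [TopologicalSpace Y] (Φ : T → Set Y) : Prop :=
  ∀ V : Set Y, IsOpen V → MeasurableSet {t : T | (Φ t ∩ V).Nonempty}

/-- A correspondence `Φ : T × Z → 2^Y` is jointly lower measurable if
`{(t,x) | Φ t x ∩ V ≠ ∅}` is product-measurable for every open `V ⊆ Y`. -/
def JLowerMeas {T Z Y : Type*} [MeasurableSpace T] [MeasurableSpace Z] [TopologicalSpace Y]
    (Φ : T → Z → Set Y) : Prop :=
  ∀ V : Set Y, IsOpen V → MeasurableSet {p : T × Z | (Φ p.1 p.2 ∩ V).Nonempty}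

/-- `F, O` witness the continuous inclusion property for `Ψ`. -/
def CIPWitness {T Z Y : Type*} [MeasurableSpace T] [TopologicalSpace Z]
    [NormedAddCommGroup Y] [NormedSpace ℝ Y]
    (Ψ : T → Z → Set Y) (F : Z → T → Z → Set Y) (O : Z → T → Set Z) : Prop :=
  (∀ z t, (Ψ t z).Nonempty →
      IsOpen (O z t) ∧ z ∈ O z t ∧ ∀ x ∈ O z t, (F z t x).Nonempty ∧ F z t x ⊆ Ψ t x) ∧
  (∀ z t, (Ψ t z).Nonempty → LSCCorrOn (fun x => convexHull ℝ (F z t x)) (O z t)) ∧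
  (∀ z t, ¬(Ψ t z).Nonempty → LSCCorr fun x => convexHull ℝ (F z t x))

/-- The continuous inclusion property. -/
def ContinuousInclusion {T Z Y : Type*} [MeasurableSpace T] [TopologicalSpace Z]
    [NormedAddCommGroup Y] [NormedSpace ℝ Y] (Ψ : T → Z → Set Y) : Prop :=
  ∃ F O, CIPWitness Ψ F O

/-- `F, O` witness the strong continuous inclusion property for `Ψ`. -/
def SCIPWitness {T Z Y : Type*} [MeasurableSpace T] [TopologicalSpace Z] [MeasurableSpace Z]
    [NormedAddCommGroup Y] [NormedSpace ℝ Y]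
    (Ψ : T → Z → Set Y) (F : Z → T → Z → Set Y) (O : Z → T → Set Z) : Prop :=
  CIPWitness Ψ F O ∧
  (∀ z, JLowerMeas fun t x => convexHull ℝ (F z t x)) ∧
  ((∀ y z, F y = F z) ∨
    ((Set.range F).Countable ∧
      {s : Set Z | ∃ t z, (Ψ t z).Nonempty ∧ s = O z t}.Countable ∧
      ∀ z, MeasurableSet {p : T × Z | p.2 ∈ O z p.1}) ∨
    (MeasurableSet {p : T × Z | (Ψ p.1 p.2).Nonempty} ∧
      JLowerMeas (fun t x => {z : Z | (Ψ t z).Nonempty ∧ x ∈ O z t}) ∧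
      (∀ t x, {z : Z | (Ψ t z).Nonempty ∧ x ∈ O z t}.Finite) ∧
      ∀ t x, ∃ B : Set Y, IsCompact B ∧
        LSCCorr (fun z => convexHull ℝ (F z t x)) ∧
        USCCorr (fun z => convexHull ℝ (F z t x)) ∧
        ∀ z, convexHull ℝ (F z t x) ⊆ B))

/-- The strong continuous inclusion property. -/
def StrongContinuousInclusion {T Z Y : Type*} [MeasurableSpace T] [TopologicalSpace Z]
    [MeasurableSpace Z] [NormedAddCommGroup Y] [NormedSpace ℝ Y] (Ψ : T → Z → Set Y) : Prop :=
  ∃ F O, SCIPWitness Ψ F O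

/-- The operator `𝕂(Ψ)(t,x) = ⋃ {int F_z(t,x) : Ψ(t,z) ≠ ∅ and x ∈ O_z^t}`. -/
def Kmap {T Z Y : Type*} [TopologicalSpace Y]
    (Ψ : T → Z → Set Y) (F : Z → T → Z → Set Y) (O : Z → T → Set Z)
    (t : T) (x : Z) : Set Y :=
  ⋃ z ∈ {z : Z | (Ψ t z).Nonempty ∧ x ∈ O z t}, interior (F z t x)

/-- `A` is an atom of the measure `μ`. -/
def IsMeasAtom {T : Type*} [MeasurableSpace T] (μ : Measure T) (A : Set T) : Prop :=
  MeasurableSet A ∧ μ A ≠ 0 ∧ ∀ B ⊆ A, MeasurableSet B → μ B = 0 ∨ μ (A \ B) = 0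

/-- The measure space is (purely) atomic: it is the union of countably many atoms. -/
def IsAtomicMeasure {T : Type*} [MeasurableSpace T] (μ : Measure T) : Prop :=
  ∃ S : Set (Set T), S.Countable ∧ (∀ A ∈ S, IsMeasAtom μ A) ∧ ⋃₀ S = Set.univ

/-- `ψ` is a Carathéodory-type selection of `Ψ` on `U_Ψ`: it selects from `Ψ` on `U_Ψ`,
is measurable in `t` on each section `U_Ψ^x` and continuous in `x` on each section `U_Ψ^t`. -/
def CaraSelection {T Z Y : Type*} [MeasurableSpace T] [TopologicalSpace Z]
    [TopologicalSpace Y] [MeasurableSpace Y]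
    (Ψ : T → Z → Set Y) (ψ : T → Z → Y) : Prop :=
  (∀ t x, (Ψ t x).Nonempty → ψ t x ∈ Ψ t x) ∧
  (∀ x : Z, Measurable fun t : {t : T // (Ψ t x).Nonempty} => ψ t.1 x) ∧
  (∀ t : T, Continuous fun x : {x : Z // (Ψ t x).Nonempty} => ψ t x.1)

open Filter Topology in
theorem baire_tube (O : Set (ℕ → ℕ)) (hO : IsOpen O) (n : ℕ → ℕ)
    (h : {s : ℕ → ℕ | ∀ i, s i ≤ n i} ⊆ O) :
    ∃ k, {s : ℕ → ℕ | ∀ i < k, s i ≤ n i} ⊆ O := by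
  by_contra hc
  push Not at hc
  have hc' : ∀ k, ∃ s : ℕ → ℕ, (∀ i < k, s i ≤ n i) ∧ s ∉ O := by
    intro k
    obtain ⟨s, hs, hs'⟩ := not_subset.1 (hc k)
    exact ⟨s, hs, hs'⟩
  choose s hs hsO using hc'
  have hcomp : IsCompact {s : ℕ → ℕ | ∀ i, s i ≤ n i} := by
    have := isCompact_univ_pi (s := fun i => Set.Iic (n i)) (fun i => (Set.finite_Iic (n i)).isCompact)
    convert this using 1
    ext s; simp [Pi.le_def]
  obtain ⟨a, ha, φ, hφ, hlim⟩ := hcomp.tendsto_subseq (x := fun k i => min (s k i) (n i))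
    (fun k i => min_le_right _ _)
  have : Tendsto (fun j => s (φ j)) atTop (𝓝 a) := by
    rw [tendsto_pi_nhds] at hlim ⊢
    intro i
    refine (hlim i).congr' ?_
    filter_upwards [eventually_gt_atTop i] with j hj
    exact min_eq_left (hs (φ j) i (hj.trans_le (hφ.id_le j)))
  have := hO.isClosed_compl.mem_of_tendsto this (Eventually.of_forall fun j => hsO (φ j))
  exact this (h ha)

theorem analytic_inner {X : Type*} [TopologicalSpace X] [T2Space X] [MeasurableSpace X]
    [BorelSpace X] (ν : Measure X) [ν.OuterRegular] (f : (ℕ → ℕ) → X) (hf : Continuous f)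
    (a : ENNReal) (ha : a < ν (range f)) : ∃ K ⊆ range f, MeasurableSet K ∧ a ≤ ν K := by
  classical
  let m : ℕ → Set (ℕ → ℕ) → ℕ := fun k P =>
    if h : ∃ m, a < ν (f '' (P ∩ {s | s k ≤ m})) then h.choose else 0
  let P : ℕ → Set (ℕ → ℕ) := fun k => Nat.rec univ (fun k Q => Q ∩ {s | s k ≤ m k Q}) k
  have hP : ∀ k, P (k+1) = P k ∩ {s | s k ≤ m k (P k)} := fun k => rfl
  have hPa : ∀ k, a < ν (f '' P k) := by
    intro k
    induction k with
    | zero => simpa [P] using ha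
    | succ k ih =>
      have h : ∃ m, a < ν (f '' (P k ∩ {s | s k ≤ m})) := by
        have hU : f '' P k = ⋃ m : ℕ, f '' (P k ∩ {s | s k ≤ m}) := by
          rw [← image_iUnion, ← inter_iUnion]
          congr 1
          ext s
          simp only [mem_inter_iff, mem_iUnion, mem_ofPred_eq]
          exact ⟨fun h => ⟨h, s k, le_rfl⟩, fun h => h.1⟩
        have hm : Monotone fun m : ℕ => f '' (P k ∩ {s | s k ≤ m}) := by
          intro i j hij
          exact image_mono (inter_subset_inter_right _ fun s (hs : s k ≤ i) => hs.trans hij)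
        rw [hU, hm.measure_iUnion] at ih
        exact lt_iSup_iff.1 ih
      rw [hP]
      have := h.choose_spec
      simp only [m, dif_pos h]
      exact this
  let n : ℕ → ℕ := fun k => m k (P k)
  have hPn : ∀ k, P k = {s | ∀ i < k, s i ≤ n i} := by
    intro k
    induction k with
    | zero => simp [P]
    | succ k ih =>
      rw [hP]
      change P k ∩ {s | s k ≤ n k} = _
      rw [ih]
      ext s
      simp only [mem_inter_iff, mem_ofPred_eq, Nat.lt_succ_iff_lt_or_eq]
      constructor
      · rintro ⟨h1, h2⟩ i (h | rfl)
        · exact h1 i h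
        · exact h2
      · intro h
        exact ⟨fun i hi => h i (Or.inl hi), h k (Or.inr rfl)⟩
  have hcomp : IsCompact {s : ℕ → ℕ | ∀ i, s i ≤ n i} := by
    have := isCompact_univ_pi (s := fun i => Set.Iic (n i)) (fun i => (Set.finite_Iic (n i)).isCompact)
    convert this using 1
    ext s; simp [Pi.le_def]
  refine ⟨f '' {s | ∀ i, s i ≤ n i}, image_subset_range _ _, (hcomp.image hf).measurableSet, ?_⟩
  by_contra hlt
  push Not at hlt
  obtain ⟨O, hO, hOo, hOa⟩ := Set.exists_isOpen_lt_of_lt _ _ hlt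
  obtain ⟨k, hk⟩ := baire_tube (f ⁻¹' O) (hOo.preimage hf) n (image_subset_iff.1 hO)
  have h1 := hPa k
  rw [hPn k] at h1
  exact absurd ((h1.trans_le (measure_mono (image_subset_iff.2 hk))).trans hOa) (lt_irrefl _)

theorem analytic_nullMeas {X : Type*} [TopologicalSpace X] [T2Space X] [MeasurableSpace X]
    [BorelSpace X] (ν : Measure X) [IsFiniteMeasure ν] [ν.OuterRegular] (A : Set X)
    (hA : AnalyticSet A) : NullMeasurableSet A ν := by
  rw [AnalyticSet] at hA
  rcases hA with rfl | ⟨f, hf, rfl⟩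
  · exact MeasurableSet.empty.nullMeasurableSet
  rcases eq_or_ne (ν (range f)) 0 with h0 | h0
  · exact NullMeasurableSet.of_null h0
  obtain ⟨u, -, hu, hlim⟩ := exists_seq_strictMono_tendsto' (pos_iff_ne_zero.2 h0)
  choose K hK hKm hKa using fun j => analytic_inner ν f hf (u j) (hu j).2
  have hae : (⋃ j, K j) =ᵐ[ν] range f := by
    refine ae_eq_of_subset_of_measure_ge (iUnion_subset hK) ?_
      (MeasurableSet.iUnion hKm).nullMeasurableSet (measure_ne_top _ _)
    exact le_of_tendsto' hlim fun j => (hKa j).trans (measure_mono (subset_iUnion _ _))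
  exact (MeasurableSet.iUnion hKm).nullMeasurableSet.congr hae

theorem meas_factor {T Z : Type*} [MeasurableSpace T] [MeasurableSpace Z] (A : Set (T × Z))
    (hA : MeasurableSet A) : ∃ (g : T → (ℕ → Bool)) (B : Set ((ℕ → Bool) × Z)),
      Measurable g ∧ MeasurableSet B ∧ A = (fun p : T × Z => (g p.1, p.2)) ⁻¹' B := by
  classical
  induction A, hA using MeasurableSpace.induction_on_inter
    (generateFrom_prod (α := T) (β := Z)).symm isPiSystem_prod with
  | empty => exact ⟨fun _ _ => false, ∅, measurable_const, MeasurableSet.empty, by simp⟩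
  | basic A hA =>
    obtain ⟨S, hS, R, hR, rfl⟩ := hA
    refine ⟨fun t _ => decide (t ∈ S), {p | p.1 0 = true} ∩ {p | p.2 ∈ R}, ?_, ?_, ?_⟩
    · refine measurable_pi_lambda _ fun _ => ?_
      refine measurable_to_bool ?_
      have : (fun t => decide (t ∈ S)) ⁻¹' {true} = S := by ext; simp
      rw [this]; exact hS
    · refine MeasurableSet.inter ?_ (measurable_snd hR)
      have hm : Measurable fun p : (ℕ → Bool) × Z => p.1 0 :=
        (measurable_pi_apply 0).comp measurable_fst
      exact hm (measurableSet_singleton true)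
    · ext p; simp [mem_prod]
  | compl A hA ih =>
    obtain ⟨g, B, hg, hB, rfl⟩ := ih
    exact ⟨g, Bᶜ, hg, hB.compl, rfl⟩
  | iUnion A hd hA ih =>
    choose g B hg hB h using ih
    let π : ℕ → (ℕ → Bool) → (ℕ → Bool) := fun n c k => c (Nat.pair n k)
    have hπ : ∀ n, Measurable (π n) := fun n => measurable_pi_lambda _ fun k => measurable_pi_apply _
    refine ⟨fun t k => g k.unpair.1 t k.unpair.2,
      ⋃ n, (fun p : (ℕ → Bool) × Z => (π n p.1, p.2)) ⁻¹' B n, ?_, ?_, ?_⟩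
    · exact measurable_pi_lambda _ fun k => (measurable_pi_apply _).comp (hg _)
    · exact MeasurableSet.iUnion fun n =>
        (((hπ n).comp measurable_fst).prodMk measurable_snd) (hB n)
    · ext p
      simp only [mem_iUnion, mem_preimage, h, π, Nat.unpair_pair]

theorem meas_proj {T Z : Type*} [MeasurableSpace T] (μ : Measure T) [IsFiniteMeasure μ]
    (hcomp : μ.IsComplete) [TopologicalSpace Z] [PolishSpace Z] [MeasurableSpace Z] [BorelSpace Z]
    (A : Set (T × Z)) (hA : MeasurableSet A) : MeasurableSet (Prod.fst '' A) := by
  obtain ⟨g, B, hg, hB, rfl⟩ := meas_factor A hA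
  have : PolishSpace Bool := {}
  have han : AnalyticSet (Prod.fst '' B) := hB.analyticSet.image_of_continuous continuous_fst
  have hnull := analytic_nullMeas (μ.map g) _ han
  have h2 : NullMeasurableSet (g ⁻¹' (Prod.fst '' B)) μ :=
    hnull.preimage ⟨hg, Measure.AbsolutelyContinuous.rfl⟩
  have h3 := h2.measurable_of_complete
  convert h3 using 1
  ext t
  constructor
  · rintro ⟨⟨t, x⟩, h, rfl⟩
    exact ⟨_, h, rfl⟩
  · rintro ⟨⟨c, x⟩, h, hc⟩
    simp only at hc
    subst hc
    exact ⟨(t, x), h, rfl⟩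

theorem lsc_approx {X Y : Type*} [TopologicalSpace X] [PseudoMetrizableSpace X]
    [NormedAddCommGroup Y] [NormedSpace ℝ Y] (Φ : X → Set Y)
    (hne : ∀ x, (Φ x).Nonempty) (hconv : ∀ x, Convex ℝ (Φ x)) (hlsc : LSCCorr Φ)
    (ε : ℝ) (hε : 0 < ε) :
    ∃ g : C(X, Y), ∀ x, (Φ x ∩ Metric.ball (g x) ε).Nonempty := by
  let _ := pseudoMetrizableSpacePseudoMetric X
  obtain ⟨g, hg⟩ := exists_continuous_forall_mem_convex_of_local_const
    (t := fun x => Metric.thickening ε (Φ x)) (fun x => (hconv x).thickening ε) (by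
      intro x
      obtain ⟨y, hy⟩ := hne x
      refine ⟨y, ?_⟩
      have ho := hlsc (Metric.ball y ε) Metric.isOpen_ball
      filter_upwards [ho.mem_nhds ⟨y, hy, Metric.mem_ball_self hε⟩] with x' hx'
      obtain ⟨w, hw, hw'⟩ := hx'
      exact Metric.mem_thickening_iff.2 ⟨w, hw, by rwa [dist_comm]⟩)
  refine ⟨g, fun x => ?_⟩
  obtain ⟨w, hw, hw'⟩ := Metric.mem_thickening_iff.1 (hg x)
  exact ⟨w, hw, by rwa [Metric.mem_ball, dist_comm]⟩

theorem lsc_inter_ball {X Y : Type*} [TopologicalSpace X]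
    [PseudoMetricSpace Y] (Φ : X → Set Y) (hlsc : LSCCorr Φ)
    (g : X → Y) (hg : Continuous g) (ε : ℝ) :
    LSCCorr fun x => Φ x ∩ Metric.ball (g x) ε := by
  intro V hV
  rw [isOpen_iff_mem_nhds]
  rintro x ⟨y, ⟨hy, hyb⟩, hyV⟩
  rw [Metric.mem_ball] at hyb
  obtain ⟨δ, hδ, hδ'⟩ := exists_between hyb
  have ho := hlsc (V ∩ Metric.ball y (ε - δ)) (hV.inter Metric.isOpen_ball)
  have h1 : ∀ᶠ x' in nhds x, dist y (g x') < δ :=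
    (continuous_const.dist hg).continuousAt.eventually_lt continuousAt_const hδ
  filter_upwards [ho.mem_nhds ⟨y, hy, hyV, Metric.mem_ball_self (by linarith)⟩, h1] with x' hx' h2
  obtain ⟨w, hw, hwV, hwb⟩ := hx'
  refine ⟨w, ⟨hw, ?_⟩, hwV⟩
  rw [Metric.mem_ball] at hwb ⊢
  linarith [dist_triangle w y (g x')]

theorem michael_closure {X Y : Type*} [TopologicalSpace X] [PseudoMetrizableSpace X]
    [NormedAddCommGroup Y] [NormedSpace ℝ Y] [CompleteSpace Y] (Φ : X → Set Y)
    (hne : ∀ x, (Φ x).Nonempty) (hconv : ∀ x, Convex ℝ (Φ x)) (hlsc : LSCCorr Φ) :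
    ∃ g : C(X, Y), ∀ x, g x ∈ closure (Φ x) := by
  classical
  let good : ℕ → C(X, Y) → Prop := fun n g => ∀ x, (Φ x ∩ Metric.ball (g x) ((1/2:ℝ)^n)).Nonempty
  have step : ∀ n (g : C(X, Y)), good n g →
      ∃ g' : C(X, Y), good (n+1) g' ∧ ∀ x, dist (g x) (g' x) ≤ 2 * (1/2:ℝ)^n := by
    intro n g hg
    obtain ⟨g', hg'⟩ := lsc_approx (fun x => Φ x ∩ Metric.ball (g x) ((1/2:ℝ)^n)) hg
      (fun x => (hconv x).inter (convex_ball _ _)) (lsc_inter_ball Φ hlsc g g.continuous _)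
      ((1/2:ℝ)^(n+1)) (by positivity)
    refine ⟨g', fun x => ?_, fun x => ?_⟩
    · obtain ⟨w, ⟨h1, h2⟩, h3⟩ := hg' x
      exact ⟨w, h1, h3⟩
    · obtain ⟨w, ⟨h1, h2⟩, h3⟩ := hg' x
      rw [Metric.mem_ball] at h2 h3
      have := dist_triangle_left (g x) (g' x) w
      have h4 : (1/2:ℝ)^(n+1) ≤ (1/2:ℝ)^n := by
        rw [pow_succ]; have : (0:ℝ) < (1/2)^n := by positivity
        linarith
      linarith
  obtain ⟨g0, hg0⟩ : ∃ g, good 0 g := lsc_approx Φ hne hconv hlsc _ (by positivity)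
  choose! nx hnx1 hnx2 using step
  let G : ℕ → C(X, Y) := fun n => Nat.rec g0 (fun k g => nx k g) n
  have hG : ∀ n, good n (G n) := by
    intro n
    induction n with
    | zero => exact hg0
    | succ n ih => exact hnx1 n _ ih
  have hd : ∀ n x, dist (G n x) (G (n+1) x) ≤ 2 * (1/2:ℝ)^n := fun n x => hnx2 n _ (hG n) x
  have hcau : ∀ x, CauchySeq fun n => G n x := fun x =>
    cauchySeq_of_le_geometric _ _ (by norm_num) fun n => hd n x
  choose L hL using fun x => cauchySeq_tendsto_of_complete (hcau x)
  have hLd : ∀ n x, dist (G n x) (L x) ≤ 2 * (1/2:ℝ)^n / (1 - 1/2) := fun n x =>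
    dist_le_of_le_geometric_of_tendsto _ _ (by norm_num) (fun n => hd n x) (hL x) n
  have hz : Filter.Tendsto (fun n : ℕ => 2 * (1/2:ℝ)^n / (1 - 1/2)) Filter.atTop (nhds 0) := by
    have := (tendsto_pow_atTop_nhds_zero_of_lt_one (r := (1/2:ℝ)) (by norm_num) (by norm_num))
    simpa using (this.const_mul 2).div_const (1 - 1/2)
  have hz' := tendsto_pow_atTop_nhds_zero_of_lt_one (r := (1/2:ℝ)) (by norm_num) (by norm_num)
  have hunif : TendstoUniformly (fun n x => G n x) L Filter.atTop := by
    rw [Metric.tendstoUniformly_iff]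
    intro ε hε
    filter_upwards [hz.eventually_lt_const hε] with n hn x
    rw [dist_comm]
    exact (hLd n x).trans_lt hn
  refine ⟨⟨L, hunif.continuous (Filter.Frequently.of_forall fun n => (G n).continuous)⟩, fun x => ?_⟩
  rw [Metric.mem_closure_iff]
  intro ε hε
  obtain ⟨n, h1, h2⟩ := ((hz.eventually_lt_const (half_pos hε)).and
    (hz'.eventually_lt_const (half_pos hε))).exists
  obtain ⟨w, hw, hwb⟩ := hG n x
  rw [Metric.mem_ball] at hwb
  refine ⟨w, hw, ?_⟩
  have := dist_triangle_left (L x) w (G n x)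
  have := hLd n x
  rw [dist_comm] at hwb
  show dist (L x) w < ε
  linarith

theorem michael_dense {X Y : Type*} [TopologicalSpace X] [PseudoMetrizableSpace X]
    [NormedAddCommGroup Y] [NormedSpace ℝ Y] [CompleteSpace Y] [SeparableSpace Y] (Φ : X → Set Y)
    (hne : ∀ x, (Φ x).Nonempty) (hconv : ∀ x, Convex ℝ (Φ x)) (hlsc : LSCCorr Φ) :
    ∃ f : ℕ → C(X, Y), (∀ n x, f n x ∈ closure (Φ x)) ∧
      ∀ x, Φ x ⊆ closure (range fun n => f n x) := by
  classical
  let _ := pseudoMetrizableSpacePseudoMetric X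
  obtain ⟨d, hd⟩ := exists_dense_seq Y
  -- balls of rational radius
  let V : ℕ × ℕ → Set Y := fun p => Metric.ball (d p.1) (1 / ((p.2 : ℝ) + 1))
  have hWo : ∀ p, IsOpen {x | (Φ x ∩ V p).Nonempty} := fun p => hlsc _ Metric.isOpen_ball
  choose C hCc hCs hCu _ using fun p => (hWo p).exists_iUnion_isClosed
  have hsel : ∀ q : (ℕ × ℕ) × ℕ, ∃ g : C(X, Y), (∀ x, g x ∈ closure (Φ x)) ∧
      ∀ x ∈ C q.1 q.2, g x ∈ closure (V q.1) := by
    intro q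
    obtain ⟨g, hg⟩ := michael_closure (fun x => if x ∈ C q.1 q.2 then Φ x ∩ V q.1 else Φ x)
      (by
        intro x
        by_cases h : x ∈ C q.1 q.2
        · simp only [if_pos h]; exact hCs _ _ h
        · simp only [if_neg h]; exact hne x)
      (by
        intro x
        by_cases h : x ∈ C q.1 q.2
        · simp only [if_pos h]; exact (hconv x).inter (convex_ball _ _)
        · simp only [if_neg h]; exact hconv x)
      (by
        intro O hO
        have : {x | ((if x ∈ C q.1 q.2 then Φ x ∩ V q.1 else Φ x) ∩ O).Nonempty} =
            {x | (Φ x ∩ (V q.1 ∩ O)).Nonempty} ∪ ({x | (Φ x ∩ O).Nonempty} ∩ (C q.1 q.2)ᶜ) := by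
          ext x
          by_cases h : x ∈ C q.1 q.2
          · simp [h, inter_assoc]
          · simp only [mem_ofPred_eq, mem_union, mem_inter_iff, mem_compl_iff, h,
              not_false_eq_true, and_true]
            exact ⟨Or.inr, fun h => h.elim (fun h => h.mono fun y hy => ⟨hy.1, hy.2.2⟩) id⟩
        rw [this]
        exact (hlsc _ (Metric.isOpen_ball.inter hO)).union
          ((hlsc _ hO).inter (hCc _ _).isOpen_compl))
    refine ⟨g, fun x => ?_, fun x hx => ?_⟩
    · refine closure_mono ?_ (hg x)
      split_ifs
      · exact inter_subset_left
      · exact Subset.rfl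
    · have := hg x
      simp only [if_pos hx] at this
      exact closure_mono inter_subset_right this
  choose F hF1 hF2 using hsel
  obtain ⟨e, he⟩ := exists_surjective_nat ((ℕ × ℕ) × ℕ)
  refine ⟨fun n => F (e n), fun n x => hF1 _ x, fun x y hy => ?_⟩
  rw [Metric.mem_closure_iff]
  intro ε hε
  obtain ⟨k, hk⟩ := exists_nat_one_div_lt (half_pos hε)
  have hkp : (0:ℝ) < 1 / ((k:ℝ) + 1) := by positivity
  obtain ⟨i, hi⟩ := hd.exists_dist_lt y hkp
  have hx : x ∈ {x | (Φ x ∩ V (i, k)).Nonempty} := ⟨y, hy, hi⟩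
  rw [← hCu, mem_iUnion] at hx
  obtain ⟨m, hm⟩ := hx
  obtain ⟨n, hn⟩ := he ((i, k), m)
  refine ⟨F (e n) x, ⟨n, rfl⟩, ?_⟩
  rw [hn]
  have h1 := Metric.closure_ball_subset_closedBall (hF2 ((i, k), m) x hm)
  rw [Metric.mem_closedBall, dist_comm] at h1
  have := dist_triangle y (d i) (F ((i,k),m) x)
  simp only at h1 this ⊢
  linarith

theorem sep_interior {Y : Type*} [NormedAddCommGroup Y] [NormedSpace ℝ Y] (K : Set Y)
    (hK : Convex ℝ K) (hint : (interior K).Nonempty) (y : Y) (hyK : y ∉ K) :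
    ∃ l : Y →L[ℝ] ℝ, (∀ k ∈ K, l k ≤ l y) ∧ ∃ k ∈ K, l k < l y := by
  obtain ⟨l, hl⟩ := geometric_hahn_banach_open_point hK.interior isOpen_interior
    (fun h => hyK (interior_subset h))
  refine ⟨l, fun k hk => ?_, ?_⟩
  · have h1 : k ∈ closure (interior K) := by
      rw [hK.closure_interior_eq_closure_of_nonempty_interior hint]; exact subset_closure hk
    have : closure (interior K) ⊆ {k | l k ≤ l y} :=
      closure_minimal (fun k hk => (hl k hk).le) (isClosed_le l.continuous continuous_const)
    exact this h1
  · obtain ⟨k, hk⟩ := hint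
    exact ⟨k, interior_subset hk, hl k hk⟩

theorem sep_findim {Y : Type*} [NormedAddCommGroup Y] [NormedSpace ℝ Y] [FiniteDimensional ℝ Y]
    (K : Set Y) (hK : Convex ℝ K) (y : Y) (hyc : y ∈ closure K) (hyK : y ∉ K) :
    ∃ l : Y →L[ℝ] ℝ, (∀ k ∈ K, l k ≤ l y) ∧ ∃ k ∈ K, l k < l y := by
  let S : Submodule ℝ Y := Submodule.span ℝ ((fun k => k - y) '' K)
  let K' : Set S := {s | (s : Y) + y ∈ K}
  have hK' : Convex ℝ K' := by
    intro a ha b hb u v hu hv huv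
    have := hK ha hb hu hv huv
    show ((u • a + v • b : S) : Y) + y ∈ K
    convert this using 1
    simp only [Submodule.coe_add, Submodule.coe_smul, smul_add]
    have : y = u • y + v • y := by rw [← add_smul, huv, one_smul]
    nth_rewrite 1 [this]
    abel
  have hmem : ∀ k ∈ K, k - y ∈ S := fun k hk => Submodule.subset_span ⟨k, hk, rfl⟩
  have hspan : affineSpan ℝ K' = ⊤ := by
    have h0 : (0 : S) ∈ affineSpan ℝ K' := by
      have hcl : IsClosed (affineSpan ℝ K' : Set S) := AffineSubspace.closed_of_finiteDimensional _
      have : (0 : S) ∈ closure K' := by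
        rw [Metric.mem_closure_iff] at hyc ⊢
        intro ε hε
        obtain ⟨k, hk, hkd⟩ := hyc ε hε
        refine ⟨⟨k - y, hmem k hk⟩, by simpa [K'] using hk, ?_⟩
        rw [dist_comm, dist_zero_right]
        rw [dist_comm, dist_eq_norm] at hkd
        exact hkd
      exact closure_minimal (subset_affineSpan ℝ K') hcl this
    have h1 : Submodule.span ℝ K' = ⊤ := by
      have : K' = ((↑) : S → Y) ⁻¹' ((fun k => k - y) '' K) := by
        ext s
        simp only [K', mem_ofPred_eq, mem_preimage, mem_image]
        exact ⟨fun h => ⟨_, h, by abel⟩, fun ⟨k, hk, hs⟩ => by rw [← hs]; simpa using hk⟩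
      rw [this]
      exact Submodule.span_span_coe_preimage
    rw [← AffineSubspace.coe_eq_univ_iff]
    have h2 : Submodule.span ℝ K' ≤ (affineSpan ℝ K').direction := by
      rw [Submodule.span_le]
      intro s hs
      have := AffineSubspace.vsub_mem_direction (subset_affineSpan ℝ K' hs) h0
      simpa using this
    rw [h1] at h2
    ext s
    simp only [mem_univ, iff_true]
    have := AffineSubspace.vadd_mem_of_mem_direction (h2 (Submodule.mem_top (x := s))) h0
    simpa using this
  have hint : (interior K').Nonempty := hK'.interior_nonempty_iff_affineSpan_eq_top.2 hspan
  obtain ⟨l, hl1, k, hk, hl2⟩ := sep_interior K' hK' hint 0 (by simpa [K'] using hyK)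
  obtain ⟨L, hL, -⟩ := exists_extension_norm_eq S l
  refine ⟨L, fun k hk => ?_, k + y, hk, ?_⟩
  · have := hl1 ⟨k - y, hmem k hk⟩ (by simpa [K'] using hk)
    rw [← hL] at this
    simp at this
    linarith
  · rw [← hL] at hl2
    simp at hl2
    simp [hl2]

theorem michael_inside {X Y : Type*} [TopologicalSpace X] [PseudoMetrizableSpace X]
    [NormedAddCommGroup Y] [NormedSpace ℝ Y] [CompleteSpace Y] [SeparableSpace Y] (Φ : X → Set Y)
    (hne : ∀ x, (Φ x).Nonempty) (hconv : ∀ x, Convex ℝ (Φ x)) (hlsc : LSCCorr Φ)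
    (hsep : ∀ x, ∀ y ∈ closure (Φ x), y ∉ Φ x →
      ∃ l : Y →L[ℝ] ℝ, (∀ k ∈ Φ x, l k ≤ l y) ∧ ∃ k ∈ Φ x, l k < l y) :
    ∃ g : C(X, Y), ∀ x, g x ∈ Φ x := by
  obtain ⟨f, hf, hfd⟩ := michael_dense Φ hne hconv hlsc
  let c : ℕ → X → ℝ := fun n x => (max 1 ‖f n x - f 0 x‖)⁻¹
  have hc0 : ∀ n x, 0 < c n x := fun n x => inv_pos.2 (lt_max_of_lt_left one_pos)
  have hc1 : ∀ n x, c n x ≤ 1 := fun n x => inv_le_one_of_one_le₀ (le_max_left _ _)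
  let h : ℕ → X → Y := fun n x => c n x • (f n x - f 0 x)
  have hh1 : ∀ n x, ‖h n x‖ ≤ 1 := by
    intro n x
    simp only [h, norm_smul, Real.norm_of_nonneg (hc0 n x).le]
    have : (0:ℝ) < max 1 ‖f n x - f 0 x‖ := lt_max_of_lt_left one_pos
    rw [inv_mul_le_iff₀ this, mul_one]
    exact le_max_right _ _
  have hhc : ∀ n, Continuous (h n) := by
    intro n
    have h1 : Continuous fun x => f n x - f 0 x := (f n).continuous.sub (f 0).continuous
    refine Continuous.smul ?_ h1
    exact (continuous_const.max h1.norm).inv₀ fun x => (lt_max_of_lt_left one_pos).ne'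
  let w : ℕ → ℝ := fun n => 1 / 2 * (1/2) ^ n
  have hw0 : ∀ n, 0 < w n := fun n => by positivity
  have hw : HasSum w 1 := by
    have := hasSum_geometric_two.mul_left (1/2 : ℝ)
    simpa [w] using this
  have hbd : ∀ n x, ‖w n • h n x‖ ≤ w n := fun n x => by
    rw [norm_smul, Real.norm_of_nonneg (hw0 n).le]
    exact mul_le_of_le_one_right (hw0 n).le (hh1 n x)
  have hcont : Continuous fun x => ∑' n, w n • h n x :=
    continuous_tsum (fun n => (hhc n).const_smul _) hw.summable hbd
  have hsum : ∀ x, HasSum (fun n => w n • (f 0 x + h n x)) (f 0 x + ∑' n, w n • h n x) := by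
    intro x
    have h1 : Summable fun n => w n • h n x := Summable.of_norm_bounded hw.summable (hbd · x)
    have h2 := (hw.smul_const (f 0 x)).add h1.hasSum
    simpa [smul_add] using h2
  have hmemc : ∀ n x, f 0 x + h n x ∈ closure (Φ x) := by
    intro n x
    have := (hconv x).closure.add_smul_sub_mem (hf 0 x) (hf n x) ⟨(hc0 n x).le, hc1 n x⟩
    exact this
  refine ⟨⟨fun x => f 0 x + ∑' n, w n • h n x, (f 0).continuous.add hcont⟩, fun x => ?_⟩
  show f 0 x + ∑' n, w n • h n x ∈ Φ x
  set y := f 0 x + ∑' n, w n • h n x with hy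
  by_contra hyn
  obtain ⟨l, hl1, k, hk, hlk⟩ :
      ∃ l : Y →L[ℝ] ℝ, (∀ k ∈ Φ x, l k ≤ l y) ∧ ∃ k ∈ Φ x, l k < l y := by
    by_cases hyc : y ∈ closure (Φ x)
    · exact hsep x y hyc hyn
    · obtain ⟨l, u, hu1, hu2⟩ := geometric_hahn_banach_closed_point (hconv x).closure
        isClosed_closure hyc
      have hlt : ∀ k ∈ Φ x, l k < l y := fun k hk => (hu1 k (subset_closure hk)).trans hu2
      obtain ⟨k, hk⟩ := hne x
      exact ⟨l, fun k hk => (hlt k hk).le, k, hk, hlt k hk⟩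
  have hl1' : ∀ k ∈ closure (Φ x), l k ≤ l y := fun k hk =>
    (closure_minimal (t := {k | l k ≤ l y}) hl1 (isClosed_le l.continuous continuous_const)) hk
  have hls : HasSum (fun n => w n * (l y - l (f 0 x + h n x))) 0 := by
    have h1 := l.hasSum (hsum x)
    have h2 := (hw.mul_right (l y)).sub h1
    rw [one_mul, sub_self] at h2
    simpa only [mul_sub, map_smul, smul_eq_mul] using h2
  have hz : ∀ n, l (f 0 x + h n x) = l y := by
    intro n
    have h1 : ∀ n, 0 ≤ w n * (l y - l (f 0 x + h n x)) := fun n =>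
      mul_nonneg (hw0 n).le (sub_nonneg.2 (hl1' _ (hmemc n x)))
    have := congrFun ((hasSum_zero_iff_of_nonneg h1).1 hls) n
    have h3 := (mul_eq_zero.1 this).resolve_left (hw0 n).ne'
    linarith
  have hz0 : l (f 0 x) = l y := by simpa [h] using hz 0
  have hzn : ∀ n, l (f n x) = l y := by
    intro n
    have := hz n
    simp only [h, map_add, map_smul, map_sub, smul_eq_mul, hz0] at this
    have h3 := (mul_eq_zero.1 (by linarith : c n x * (l (f n x) - l y) = 0)).resolve_left (hc0 n x).ne'
    linarith
  have : closure (range fun n => f n x) ⊆ {k | l k = l y} :=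
    closure_minimal (by rintro _ ⟨n, rfl⟩; exact hzn n) (isClosed_eq l.continuous continuous_const)
  exact hlk.ne (this (hfd x hk))

/-- **Kim–Prikry–Yannelis Carathéodory-type selection theorem.**
Let `(T,𝒯,μ)` be a complete finite measure space, `Y` a separable Banach space, and `Z` a
complete separable metric space.  If `Ψ : T × Z → 2^Y` is a convex (possibly empty) valued
correspondence that is jointly lower measurable and lower-semicontinuous in the second
variable, and either `Y` is finite-dimensional, or `Ψ` is closed-valued, or
`int Ψ(t,x) ≠ ∅` on `U_Ψ`, then `Ψ` admits a Carathéodory-type selection on `U_Ψ`. -/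
theorem stmt_0 {T Z Y : Type*} [MeasurableSpace T] (μ : Measure T) [IsFiniteMeasure μ]
    (hcomp : μ.IsComplete)
    [MetricSpace Z] [CompleteSpace Z] [SeparableSpace Z] [MeasurableSpace Z] [BorelSpace Z]
    [NormedAddCommGroup Y] [NormedSpace ℝ Y] [CompleteSpace Y] [SeparableSpace Y]
    [MeasurableSpace Y] [BorelSpace Y]
    (Ψ : T → Z → Set Y)
    (hconv : ∀ t x, Convex ℝ (Ψ t x))
    (hmeas : JLowerMeas Ψ)
    (hlsc : ∀ t, LSCCorr (Ψ t))
    (hone : FiniteDimensional ℝ Y ∨ (∀ t x, IsClosed (Ψ t x)) ∨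
      ∀ t x, (Ψ t x).Nonempty → (interior (Ψ t x)).Nonempty) :
    ∃ ψ : T → Z → Y, CaraSelection Ψ ψ := by
  classical
  have : SecondCountableTopology Z := UniformSpace.secondCountable_of_separable Z
  have : SecondCountableTopology Y := UniformSpace.secondCountable_of_separable Y
  have : PolishSpace Z := {}
  let ι := countableBasis Z × countableBasis Y
  let A : ι → Set T := fun i => {t | ∀ x ∈ (i.1 : Set Z), (Ψ t x ∩ (i.2 : Set Y)).Nonempty}
  have hA : ∀ i, MeasurableSet (A i) := by
    intro i
    have hV : IsOpen (i.2 : Set Y) := isOpen_of_mem_countableBasis i.2.2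
    have hB : IsOpen (i.1 : Set Z) := isOpen_of_mem_countableBasis i.1.2
    have h1 := meas_proj μ hcomp _
      ((hmeas _ hV).compl.inter (measurable_snd hB.measurableSet))
    have h2 : A i = (Prod.fst '' ({p : T × Z | (Ψ p.1 p.2 ∩ (i.2 : Set Y)).Nonempty}ᶜ ∩
        Prod.snd ⁻¹' (i.1 : Set Z)))ᶜ := by
      ext t
      constructor
      · rintro h ⟨⟨t', x⟩, ⟨h3, h4⟩, rfl⟩
        exact h3 (h x h4)
      · intro h x hx
        by_contra h3
        exact h ⟨(t, x), ⟨h3, hx⟩, rfl⟩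
    rw [h2]
    exact h1.compl
  let e : T → (ι → Bool) := fun t i => decide (t ∈ A i)
  have he : Measurable e := by
    refine measurable_pi_lambda _ fun i => measurable_to_bool ?_
    have : (fun t => e t i) ⁻¹' {true} = A i := by ext; simp [e]
    rw [this]; exact hA i
  let τ : TopologicalSpace T := TopologicalSpace.induced e inferInstance
  have hei : Topology.IsInducing e := ⟨rfl⟩
  have : PseudoMetrizableSpace T := hei.pseudoMetrizableSpace
  have : OpensMeasurableSpace T := by
    refine ⟨?_⟩
    rw [borel]
    refine MeasurableSpace.generateFrom_le ?_
    rintro s ⟨u, hu, rfl⟩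
    exact he hu.measurableSet
  have hAo : ∀ i, IsOpen (A i) := by
    intro i
    have : A i = (fun t => e t i) ⁻¹' {true} := by ext; simp [e]
    rw [this]
    exact (isOpen_discrete _).preimage ((continuous_apply i).comp hei.continuous)
  have hlscJ : LSCCorr fun p : T × Z => Ψ p.1 p.2 := by
    intro V hV
    rw [isOpen_iff_mem_nhds]
    rintro ⟨t, x⟩ ⟨y, hy, hyV⟩
    obtain ⟨V', hV', hyV', hVV⟩ := (isBasis_countableBasis Y).exists_subset_of_mem_open hyV hV
    have hopen := hlsc t V' (isOpen_of_mem_countableBasis hV')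
    obtain ⟨B, hB, hxB, hBs⟩ := (isBasis_countableBasis Z).exists_subset_of_mem_open
      (show x ∈ {x | (Ψ t x ∩ V').Nonempty} from ⟨y, hy, hyV'⟩) hopen
    have hn : A (⟨B, hB⟩, ⟨V', hV'⟩) ×ˢ B ∈ nhds (t, x) :=
      ((hAo _).prod (isOpen_of_mem_countableBasis hB)).mem_nhds ⟨fun x hx => hBs hx, hxB⟩
    filter_upwards [hn] with p hp
    exact (hp.1 p.2 hp.2).mono (inter_subset_inter_right _ hVV)
  let X := {p : T × Z // (Ψ p.1 p.2).Nonempty}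
  have hXm : PseudoMetrizableSpace X :=
    (Topology.IsInducing.subtypeVal (t := {p : T × Z | (Ψ p.1 p.2).Nonempty})).pseudoMetrizableSpace
  let Φ : X → Set Y := fun p => Ψ p.1.1 p.1.2
  have hΦne : ∀ p : X, (Φ p).Nonempty := fun p => p.2
  have hΦc : ∀ p : X, Convex ℝ (Φ p) := fun p => hconv _ _
  have hΦl : LSCCorr Φ := fun V hV => (hlscJ V hV).preimage continuous_subtype_val
  obtain ⟨g, hg⟩ : ∃ g : C(X, Y), ∀ p, g p ∈ Φ p := by
    rcases hone with h | h | h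
    · exact michael_inside Φ hΦne hΦc hΦl fun p y hy hy' => sep_findim _ (hΦc p) y hy hy'
    · obtain ⟨g, hg⟩ := michael_closure Φ hΦne hΦc hΦl
      refine ⟨g, fun p => ?_⟩
      have := hg p
      rwa [(h p.1.1 p.1.2 : IsClosed (Φ p)).closure_eq] at this
    · exact michael_inside Φ hΦne hΦc hΦl fun p y _ hy' =>
        sep_interior _ (hΦc p) (h _ _ p.2) y hy'
  refine ⟨fun t x => if h : (Ψ t x).Nonempty then g ⟨(t, x), h⟩ else 0, ?_, ?_, ?_⟩
  · intro t x h
    simp only [dif_pos h]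
    exact hg ⟨(t, x), h⟩
  · intro x
    have h1 : (fun t : {t : T // (Ψ t x).Nonempty} =>
        if h : (Ψ t.1 x).Nonempty then g ⟨(t.1, x), h⟩ else 0) =
        fun t => g ⟨(t.1, x), t.2⟩ := by
      funext t
      exact dif_pos t.2
    rw [h1]
    refine Continuous.measurable ?_
    exact g.continuous.comp ((continuous_subtype_val.prodMk continuous_const).subtype_mk _)
  · intro t
    have h1 : (fun x : {x : Z // (Ψ t x).Nonempty} =>
        if h : (Ψ t x.1).Nonempty then g ⟨(t, x.1), h⟩ else 0) =
        fun x => g ⟨(t, x.1), x.2⟩ := by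
      funext x
      exact dif_pos x.2
    rw [h1]
    exact g.continuous.comp ((continuous_const.prodMk continuous_subtype_val).subtype_mk _)
end
end

section
/- Let Y be a normed linear space and let B be a convex subset of Y. If B is closed, or B has an interior point, or B is finite-dimensional (contained in a finite-dimensional subspace), then 𝕀(cl B) ⊆ B. -/
open Set

noncomputable section

/-- `S` is a supporting set of the closed convex set `C`: a closed convex proper subset of `C`
such that whenever an interior point of a segment lying in `C` belongs to `S`, the whole
segment lies in `S`. -/
def SupportingSet {Y : Type*} [NormedAddCommGroup Y] [NormedSpace ℝ Y] (C S : Set Y) : Prop :=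
  IsClosed S ∧ Convex ℝ S ∧ S ⊆ C ∧ S ≠ C ∧
    ∀ a b : Y, segment ℝ a b ⊆ C → (∃ w ∈ openSegment ℝ a b, w ∈ S) → segment ℝ a b ⊆ S

/-- `𝕀(C)`: the set of points of `C` lying in no supporting set of `C`. -/
def MichaelI {Y : Type*} [NormedAddCommGroup Y] [NormedSpace ℝ Y] (C : Set Y) : Set Y :=
  {y ∈ C | ∀ S : Set Y, SupportingSet C S → y ∉ S}

lemma aux_support {Y : Type*} [NormedAddCommGroup Y] [NormedSpace ℝ Y]
    (B : Set Y) (hconv : Convex ℝ B) (y : Y) (hy : y ∈ MichaelI (closure B))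
    (f : Y →L[ℝ] ℝ) (hf : ∀ b ∈ B, f b ≤ f y) (b : Y) (hb : b ∈ B) (hlt : f b < f y) : False := by
  obtain ⟨hyc, hS⟩ := hy
  have hfc : ∀ x ∈ closure B, f x ≤ f y := fun x hx =>
    closure_minimal (t := {x | f x ≤ f y}) hf (isClosed_le f.continuous continuous_const) hx
  have hcl : IsClosed {x | f x = f y} := isClosed_eq f.continuous continuous_const
  refine hS (closure B ∩ {x | f x = f y}) ⟨isClosed_closure.inter hcl, ?_, inter_subset_left,
    ?_, ?_⟩ ⟨hyc, rfl⟩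
  · exact hconv.closure.inter (convex_hyperplane f.toLinearMap.isLinear _)
  · intro h
    have : b ∈ closure B ∩ {x | f x = f y} := by rw [h]; exact subset_closure hb
    exact hlt.ne this.2
  · rintro p q hpq ⟨w, ⟨s, t, hs, ht, hst, rfl⟩, hw⟩
    have hp := hfc p (hpq (left_mem_segment ℝ p q))
    have hq := hfc q (hpq (right_mem_segment ℝ p q))
    have hw2 : s * f p + t * f q = f y := by simpa using hw.2
    have e1 : f p = f y := by
      obtain rfl : t = 1 - s := by linarith
      nlinarith
    have e2 : f q = f y := by
      obtain rfl : t = 1 - s := by linarith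
      nlinarith
    refine fun x hx => ⟨hpq hx, ?_⟩
    obtain ⟨c, d, hc, hd, hcd, rfl⟩ := hx
    simp only [mem_ofPred_eq, map_add, map_smul, e1, e2, smul_eq_mul]
    rw [← add_mul, hcd, one_mul]

lemma aux_sep {Y : Type*} [NormedAddCommGroup Y] [NormedSpace ℝ Y]
    (B : Set Y) (hconv : Convex ℝ B) (hi : (interior B).Nonempty) (y : Y) (hy : y ∉ B) :
    ∃ f : Y →L[ℝ] ℝ, (∀ b ∈ B, f b ≤ f y) ∧ ∃ b ∈ B, f b < f y := by
  obtain ⟨f, hf⟩ := geometric_hahn_banach_open_point (x := y) hconv.interior isOpen_interior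
    (fun h => hy (interior_subset h))
  refine ⟨f, fun b hb => ?_, ?_⟩
  · have : b ∈ closure (interior B) := by
      rw [hconv.closure_interior_eq_closure_of_nonempty_interior hi]; exact subset_closure hb
    exact closure_minimal (t := {x | f x ≤ f y}) (fun x hx => (hf x hx).le)
      (isClosed_le f.continuous continuous_const) this
  · obtain ⟨b, hb⟩ := hi
    exact ⟨b, interior_subset hb, hf b hb⟩

/-- **Michael's lemma.** If a convex subset `B` of a normed linear space is closed, or has an
interior point, or is finite-dimensional, then `𝕀(cl B) ⊆ B`. -/
theorem stmt_2 {Y : Type*} [NormedAddCommGroup Y] [NormedSpace ℝ Y]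
    (B : Set Y) (hconv : Convex ℝ B)
    (h : IsClosed B ∨ (interior B).Nonempty ∨
      ∃ s : Submodule ℝ Y, FiniteDimensional ℝ s ∧ B ⊆ (s : Set Y)) :
    MichaelI (closure B) ⊆ B := by
  intro y hy
  rcases h with h | h | ⟨s, hs, hBs⟩
  · exact h.closure_eq ▸ hy.1
  · by_contra hyB
    obtain ⟨f, hf, b, hb, hlt⟩ := aux_sep B hconv h y hyB
    exact aux_support B hconv y hy f hf b hb hlt
  · by_contra hyB
    obtain ⟨b0, hb0⟩ : B.Nonempty := closure_nonempty_iff.1 ⟨y, hy.1⟩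
    set T : Set Y := (fun x => x + b0) ⁻¹' B with hT
    have hTs : T ⊆ s := fun x hx => by
      have := s.sub_mem (hBs hx) (hBs hb0)
      simpa using this
    set V := Submodule.span ℝ T with hV
    have hVs : V ≤ s := Submodule.span_le.2 hTs
    have : FiniteDimensional ℝ V := Submodule.finiteDimensional_of_le hVs
    have hmem : ∀ b ∈ B, b - b0 ∈ V := fun b hb => Submodule.subset_span (by simpa [hT] using hb)
    have hyV : y - b0 ∈ V := by
      have hc : IsClosed {x : Y | x - b0 ∈ V} :=
        (Submodule.closed_of_finiteDimensional V).preimage (continuous_id.sub continuous_const)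
      exact closure_minimal hmem hc hy.1
    set B' : Set V := Subtype.val ⁻¹' T with hB'
    have hconvT : Convex ℝ T := hconv.translate_preimage_left b0
    have hconv' : Convex ℝ B' := hconvT.linear_preimage V.subtype
    have h0 : (0 : V) ∈ B' := by simpa [hB', hT] using hb0
    have hspan : Submodule.span ℝ B' = ⊤ := Submodule.span_span_coe_preimage
    have hint : (interior B').Nonempty := by
      rw [hconv'.interior_nonempty_iff_affineSpan_eq_top]
      rw [← insert_eq_of_mem h0]
      apply SetLike.coe_injective
      rw [affineSpan_insert_zero, hspan]
      rfl
    obtain ⟨f, hf, b, hb, hlt⟩ := aux_sep B' hconv' hint ⟨y - b0, hyV⟩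
      (fun hh => hyB (by simpa [hB', hT] using hh))
    obtain ⟨g, hg, -⟩ := exists_extension_norm_eq V f
    have key : ∀ x : V, g x = f x := hg
    refine aux_support B hconv y hy g (fun c hc => ?_) (b + b0) hb ?_
    · have := hf ⟨c - b0, hmem c hc⟩ (by simpa [hB', hT] using hc)
      rw [← key, ← key] at this
      simpa using this
    · rw [← key, ← key] at hlt
      simp only [map_sub] at hlt
      rw [map_add]; linarith
end
end

section
/- Let Z and Y be metric spaces, let B ⊆ Y be compact, and let G: Z → 2^Y be a continuous correspondence with nonempty compact values such that G(z) ⊆ B for all z ∈ Z. For each nonempty compact set C ⊆ Z, the union ⋃_{z∈C} G(z) is a closed (hence compact) subset of Y, and the map N: 𝒦₀(Z) → 𝒦₀(Y) defined by N(C) = ⋃_{z∈C} G(z) is continuous when both 𝒦₀(Z) and 𝒦₀(Y) are endowed with the Hausdorff metric topology. -/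
open Set TopologicalSpace

noncomputable section

theorem continuous_nonemptyCompacts_aux {X Y : Type*} [TopologicalSpace X] [TopologicalSpace Y]
    (f : X → NonemptyCompacts Y)
    (h1 : ∀ V : Set Y, IsOpen V → IsOpen {x : X | (f x : Set Y) ⊆ V})
    (h2 : ∀ V : Set Y, IsOpen V → IsOpen {x : X | ((f x : Set Y) ∩ V).Nonempty}) :
    Continuous f := by
  letI : TopologicalSpace (Set Y) := TopologicalSpace.vietoris Y
  rw [NonemptyCompacts.isEmbedding_coe.continuous_iff]
  refine continuous_generateFrom_iff.2 ?_
  rintro _ (⟨U, hU, rfl⟩ | ⟨U, hU, rfl⟩)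
  · exact h1 U hU
  · exact h2 U hU

/-- Let `Z, Y` be metric spaces, `B ⊆ Y` compact, and `G : Z → 2^Y` a continuous
correspondence with nonempty compact values contained in `B`.  Then `⋃_{z ∈ C} G z` is closed
for every nonempty compact `C ⊆ Z`, and `N(C) = ⋃_{z ∈ C} G z` defines a continuous map
between the spaces of nonempty compact subsets endowed with the Hausdorff metric topology. -/
theorem stmt_6 {Z Y : Type*} [MetricSpace Z] [MetricSpace Y]
    (B : Set Y) (hB : IsCompact B)
    (G : Z → Set Y) (hlsc : LSCCorr G) (husc : USCCorr G)
    (hne : ∀ z, (G z).Nonempty) (hcpt : ∀ z, IsCompact (G z)) (hsub : ∀ z, G z ⊆ B) :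
    (∀ C : Set Z, C.Nonempty → IsCompact C → IsClosed (⋃ z ∈ C, G z)) ∧
    ∃ N : NonemptyCompacts Z → NonemptyCompacts Y,
      (∀ C : NonemptyCompacts Z, (N C : Set Y) = ⋃ z ∈ (C : Set Z), G z) ∧ Continuous N := by
  have hg : Continuous (fun z => (⟨⟨G z, hcpt z⟩, hne z⟩ : NonemptyCompacts Y)) :=
    continuous_nonemptyCompacts_aux _ husc hlsc
  have hc : ∀ C : Set Z, IsCompact C → IsCompact (⋃ z ∈ C, G z) := by
    intro C hC
    have := NonemptyCompacts.isCompact_biUnion_coe_of_isCompact (hC.image hg)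
    rw [biUnion_image] at this
    exact this
  refine ⟨fun C _ hC => (hc C hC).isClosed, fun C => ⟨⟨⋃ z ∈ (C : Set Z), G z, hc _ C.isCompact⟩, ?_⟩,
    fun C => rfl, ?_⟩
  · obtain ⟨z, hz⟩ := C.nonempty
    obtain ⟨y, hy⟩ := hne z
    exact ⟨y, mem_biUnion hz hy⟩
  · letI : TopologicalSpace (Set Z) := TopologicalSpace.vietoris Z
    refine continuous_nonemptyCompacts_aux _ (fun V hV => ?_) (fun V hV => ?_)
    · have := (husc V hV).powerset_vietoris.preimage (NonemptyCompacts.continuous_coe (α := Z))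
      convert this using 1
      ext C
      change (⋃ z ∈ (C : Set Z), G z) ⊆ V ↔ (C : Set Z) ⊆ {x | G x ⊆ V}
      rw [iUnion₂_subset_iff]
      rfl
    · have := (vietoris.isOpen_inter_nonempty_of_isOpen (hlsc V hV)).preimage
        (NonemptyCompacts.continuous_coe (α := Z))
      convert this using 1
      ext C
      change ((⋃ z ∈ (C : Set Z), G z) ∩ V).Nonempty ↔
        ((C : Set Z) ∩ {x | (G x ∩ V).Nonempty}).Nonempty
      constructor
      · rintro ⟨y, hy, hV⟩
        obtain ⟨z, hz, hy⟩ := mem_iUnion₂.1 hy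
        exact ⟨z, hz, y, hy, hV⟩
      · rintro ⟨z, hz, y, hy, hV⟩
        exact ⟨y, mem_biUnion hz hy, hV⟩
end
end

section
/- Let (Ω,𝓕,μ) be a complete finite measure space, I a finite or countable index set, and for each i ∈ I let X_i be a nonempty compact subset of a separable Banach space Y, with X = Π_{i∈I} X_i. Fix i ∈ I and let u_i: Ω×X → ℝ be such that u_i(ω,·): X → ℝ is continuous for each ω ∈ Ω and u_i(·,x): Ω → ℝ is measurable for each x ∈ X. Then the correspondence P_i^{u_i}: Ω×X → 2^{X_i} defined by P_i^{u_i}(ω,x) = {y_i ∈ X_i : u_i(ω, y_i, x_{-i}) − u_i(ω, x) > 0} is jointly lower measurable, P_i^{u_i}(ω,·) has open graph in X × X_i (hence is lower-semicontinuous) for each ω ∈ Ω, and consequently P_i^{u_i} satisfies the strong continuous inclusion property. -/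
open MeasureTheory Set TopologicalSpace

noncomputable section

/-- The preference correspondence induced by a family of payoff functions:
`y ∈ PrefCorr X v i ω x` iff `y ∈ Xᵢ` and `v i (ω, (y, x₋ᵢ)) − v i (ω, x) > 0`. -/
def PrefCorr {Ω Y I : Type*} [DecidableEq I] (X : I → Set Y)
    (v : (i : I) → Ω → ((j : I) → X j) → ℝ) (i : I) (ω : Ω) (x : (j : I) → X j) : Set Y :=
  {y : Y | ∃ hy : y ∈ X i, 0 < v i ω (Function.update x i ⟨y, hy⟩) - v i ω x}

/-- Membership sets of the convex hull correspondence, as a union over finite sets. -/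
lemma aux_hull_inter {Z Y : Type*} [NormedAddCommGroup Y] [NormedSpace ℝ Y]
    (D V : Set Y) (hV : IsOpen V) (Φ : Z → Set Y) (hD : ∀ x, Φ x ⊆ closure (Φ x ∩ D)) :
    {x : Z | (convexHull ℝ (Φ x) ∩ V).Nonempty} =
      ⋃ t ∈ {t : Finset D | (convexHull ℝ (Set.image Subtype.val (t : Set D) : Set Y) ∩ V).Nonempty},
        ⋂ y ∈ t, {x : Z | (y : Y) ∈ Φ x} := by
  classical
  ext x
  simp only [mem_setOf_eq, mem_iUnion, mem_iInter, exists_prop]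
  constructor
  · rintro ⟨w, hw, hwV⟩
    have h1 : convexHull ℝ (Φ x) ⊆ closure (convexHull ℝ (Φ x ∩ D)) :=
      convexHull_min ((hD x).trans (closure_mono (subset_convexHull ℝ _)))
        (convex_convexHull ℝ _).closure
    obtain ⟨v, hvV, hv⟩ := mem_closure_iff.1 (h1 hw) V hV hwV
    rw [convexHull_eq_union_convexHull_finite_subsets] at hv
    simp only [mem_iUnion, exists_prop] at hv
    obtain ⟨t, htsub, hwt⟩ := hv
    refine ⟨t.subtype (· ∈ D), ⟨v, ?_, hvV⟩, ?_⟩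
    · refine convexHull_mono ?_ hwt
      intro y hy
      exact ⟨⟨y, (htsub hy).2⟩, by simpa using hy, rfl⟩
    · intro y hy
      exact (htsub (by simpa using hy)).1
  · rintro ⟨t, ⟨w, hw, hwV⟩, ht⟩
    refine ⟨w, convexHull_mono ?_ hw, hwV⟩
    rintro _ ⟨y, hy, rfl⟩
    exact ht y hy

/-- If `uᵢ(ω,·)` is continuous for each `ω` and `uᵢ(·,x)` is measurable for each `x`, then
`Pᵢ^{uᵢ}` is jointly lower measurable, `Pᵢ^{uᵢ}(ω,·)` has open graph in `X × Xᵢ` (hence is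
lower-semicontinuous) for each `ω`, and consequently `Pᵢ^{uᵢ}` satisfies the strong
continuous inclusion property. -/
theorem stmt_13 {Ω Y I : Type*} [MeasurableSpace Ω] (μ : Measure Ω) [IsFiniteMeasure μ]
    (hcomp : μ.IsComplete) [Countable I] [DecidableEq I]
    [NormedAddCommGroup Y] [NormedSpace ℝ Y] [CompleteSpace Y] [SeparableSpace Y]
    [MeasurableSpace Y] [BorelSpace Y]
    (X : I → Set Y)
    (hXne : ∀ i, (X i).Nonempty) (hXcpt : ∀ i, IsCompact (X i))
    (i : I) (u : (j : I) → Ω → ((j : I) → X j) → ℝ)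
    (hucont : ∀ ω, Continuous (u i ω))
    (humeas : ∀ x, Measurable fun ω => u i ω x) :
    JLowerMeas (PrefCorr X u i) ∧
    (∀ ω, IsOpen {p : ((j : I) → X j) × X i | (p.2 : Y) ∈ PrefCorr X u i ω p.1}) ∧
    (∀ ω, LSCCorr (PrefCorr X u i ω)) ∧
    StrongContinuousInclusion (PrefCorr X u i) := by
  classical
  haveI : SecondCountableTopology Y := UniformSpace.secondCountable_of_separable Y
  -- open graph
  have hgraph : ∀ ω, IsOpen {p : ((j : I) → X j) × X i | (p.2 : Y) ∈ PrefCorr X u i ω p.1} := by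
    intro ω
    have : {p : ((j : I) → X j) × X i | (p.2 : Y) ∈ PrefCorr X u i ω p.1} =
        {p | 0 < u i ω (Function.update p.1 i p.2) - u i ω p.1} := by
      ext p
      simp [PrefCorr]
    rw [this]
    exact isOpen_lt continuous_const
      (((hucont ω).comp (continuous_fst.update i continuous_snd)).sub
        ((hucont ω).comp continuous_fst))
  have hsub : ∀ ω x, PrefCorr X u i ω x ⊆ X i := fun ω x y hy => hy.1
  have hsec : ∀ ω, ∀ y : X i, IsOpen {x | (y : Y) ∈ PrefCorr X u i ω x} := fun ω y =>
    (hgraph ω).preimage (Continuous.prodMk_left y)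
  have hval : ∀ ω x, IsOpen {y : X i | (y : Y) ∈ PrefCorr X u i ω x} := fun ω x =>
    (hgraph ω).preimage (Continuous.prodMk_right x)
  have hlsc : ∀ ω, LSCCorr (PrefCorr X u i ω) := by
    intro ω V hV
    have : {x | (PrefCorr X u i ω x ∩ V).Nonempty} =
        ⋃ y ∈ {y : X i | (y : Y) ∈ V}, {x | (y : Y) ∈ PrefCorr X u i ω x} := by
      ext x
      simp only [mem_setOf_eq, mem_iUnion, exists_prop]
      constructor
      · rintro ⟨y, hy, hyV⟩
        exact ⟨⟨y, hsub _ _ hy⟩, hyV, hy⟩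
      · rintro ⟨y, hyV, hy⟩
        exact ⟨y, hy, hyV⟩
    rw [this]
    exact isOpen_biUnion fun y _ => hsec ω y
  have hjoint : Measurable fun p : Ω × ((j : I) → X j) => u i p.1 p.2 := by
    have h := measurable_uncurry_of_continuous_of_measurable
      (u := fun (x : (j : I) → X j) (ω : Ω) => u i ω x) hucont humeas
    exact h.comp measurable_swap
  have hmsec : ∀ y : X i,
      MeasurableSet {p : Ω × ((j : I) → X j) | (y : Y) ∈ PrefCorr X u i p.1 p.2} := by
    intro y
    have : {p : Ω × ((j : I) → X j) | (y : Y) ∈ PrefCorr X u i p.1 p.2} =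
        {p | 0 < u i p.1 (Function.update p.2 i y) - u i p.1 p.2} := by
      ext p
      simp [PrefCorr]
    rw [this]
    refine measurableSet_lt measurable_const (Measurable.sub ?_ hjoint)
    have hupd : Measurable fun x : (j : I) → X j => Function.update x i y :=
      (continuous_id.update i continuous_const).measurable
    exact hjoint.comp (measurable_fst.prodMk (hupd.comp measurable_snd))
  -- countable dense subset of `X i`
  obtain ⟨E, hEc, hEd⟩ := exists_countable_dense (X i)
  have hdense : ∀ ω x, ∀ V : Set Y, IsOpen V → (PrefCorr X u i ω x ∩ V).Nonempty →
      ∃ y ∈ E, (y : Y) ∈ PrefCorr X u i ω x ∧ (y : Y) ∈ V := by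
    rintro ω x V hV ⟨y, hy, hyV⟩
    obtain ⟨e, he, heE⟩ := hEd.inter_open_nonempty _
      ((hval ω x).inter (hV.preimage continuous_subtype_val)) ⟨⟨y, hsub _ _ hy⟩, hy, hyV⟩
    exact ⟨e, heE, he.1, he.2⟩
  have hjlm : JLowerMeas (PrefCorr X u i) := by
    intro V hV
    have : {p : Ω × ((j : I) → X j) | (PrefCorr X u i p.1 p.2 ∩ V).Nonempty} =
        ⋃ y ∈ {y : X i | y ∈ E ∧ (y : Y) ∈ V}, {p | (y : Y) ∈ PrefCorr X u i p.1 p.2} := by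
      ext p
      simp only [mem_setOf_eq, mem_iUnion, exists_prop]
      constructor
      · intro h
        obtain ⟨y, hyE, hy, hyV⟩ := hdense _ _ V hV h
        exact ⟨y, ⟨hyE, hyV⟩, hy⟩
      · rintro ⟨y, ⟨_, hyV⟩, hy⟩
        exact ⟨y, hy, hyV⟩
    rw [this]
    exact MeasurableSet.biUnion (hEc.mono fun y hy => hy.1) fun y _ => hmsec y
  have hconlsc : ∀ ω, LSCCorr fun x => convexHull ℝ (PrefCorr X u i ω x) := by
    intro ω V hV
    rw [aux_hull_inter (X i) V hV (PrefCorr X u i ω)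
      (fun x y hy => subset_closure ⟨hy, hsub _ _ hy⟩)]
    exact isOpen_biUnion fun t _ => isOpen_biInter_finset fun y _ => hsec ω y
  have hconjlm : JLowerMeas fun ω x => convexHull ℝ (PrefCorr X u i ω x) := by
    intro V hV
    rw [aux_hull_inter (Set.image Subtype.val E : Set Y) V hV
      (fun p : Ω × ((j : I) → X j) => PrefCorr X u i p.1 p.2)]
    · haveI : Countable (Set.image Subtype.val E : Set Y) := (hEc.image _).to_subtype
      refine MeasurableSet.biUnion (to_countable _) fun t _ => ?_
      refine Finset.measurableSet_biInter t fun y _ => ?_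
      obtain ⟨e, _, hey⟩ := y.2
      rw [← hey]
      exact hmsec e
    · intro p y hy
      rw [mem_closure_iff]
      intro W hW hyW
      obtain ⟨e, heE, he, heW⟩ := hdense p.1 p.2 W hW ⟨y, hy, hyW⟩
      exact ⟨e, heW, he, e, heE, rfl⟩
  refine ⟨hjlm, hgraph, hlsc, fun _ => PrefCorr X u i,
    fun _ ω => {x | (PrefCorr X u i ω x).Nonempty}, ⟨?_, ?_, ?_⟩, fun _ => hconjlm,
    Or.inl fun _ _ => rfl⟩
  · intro z ω h
    refine ⟨?_, h, fun x hx => ⟨hx, Subset.rfl⟩⟩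
    simpa using hlsc ω univ isOpen_univ
  · intro z ω _ V hV
    exact (hconlsc ω V hV).preimage continuous_subtype_val
  · intro z ω _
    exact hconlsc ω
end
end
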